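/- arXiv:2008.12722 — 2 statements merged into one kernel-verified Lean document; each statement's English description precedes it below -/
import Mathlib

section
/- Let p : ℝ → ℝ be differentiable, even, and strictly monotone on [0,∞), and define φ(a,b) = p(a)a + p(b)b − p(a+b)(a+b). Then for every fixed b > 0, the function a ↦ φ(a,b) is differentiable at a = 0 with derivative equal to −p'(b)·b − (p(b) − p(0)), and this derivative is nonzero. -/
/-!
The summand `p(a) a` of `φ(a, b)` has derivative `p(0)` at `a = 0` as soon as `p` is continuous
there, and the product rule at `b` gives the rest. The derivative is the negative of
`p'(b) b + (p(b) - p(0))`, whose two summands cannot cancel: `p'(b)` has weakly, and `p(b) - p(0)`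
strictly, the sign prescribed by the monotonicity of `p`.
-/

open Filter Set Topology

/-- The function `φ` of the paper, measuring the failure of `x ↦ p x * x` to be additive. -/
def phi {R : Type*} [Ring R] (p : R → R) (a b : R) : R :=
  p a * a + p b * b - p (a + b) * (a + b)

theorem accPt_Icc_right {α : Type*} [TopologicalSpace α] [LinearOrder α] [OrderTopology α]
    [DenselyOrdered α] {a b : α} (hab : a < b) : AccPt b (𝓟 (Icc a b)) := by
  rw [accPt_principal_iff_nhdsWithin, Icc_sdiff_right]
  exact right_nhdsWithin_Ico_neBot hab

section NormedField

variable {𝕜 : Type*} [NontriviallyNormedField 𝕜] {p : 𝕜 → 𝕜} {p' b : 𝕜}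

theorem hasDerivAt_sub_smul_of_continuousAt {E : Type*} [NormedAddCommGroup E] [NormedSpace 𝕜 E]
    {f : 𝕜 → E} {c : 𝕜} (hf : ContinuousAt f c) :
    HasDerivAt (fun x ↦ (x - c) • f x) (f c) c := by
  rw [hasDerivAt_iff_tendsto_slope]
  refine (hf.tendsto.mono_left nhdsWithin_le_nhds).congr' ?_
  filter_upwards [self_mem_nhdsWithin] with x (hx : x ≠ c)
  simp [slope_def_module, sub_ne_zero.2 hx]

theorem hasDerivAt_phi_zero (hp₀ : ContinuousAt p 0) (hpb : HasDerivAt p p' b) :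
    HasDerivAt (fun a ↦ phi p a b) (-p' * b - (p b - p 0)) 0 := by
  have h_zero : HasDerivAt (fun x ↦ p x * x) (p 0) 0 := by
    simpa [mul_comm] using hasDerivAt_sub_smul_of_continuousAt hp₀
  have h_b : HasDerivAt (fun x ↦ p x * x) (p' * b + p b) (0 + b) := by
    simpa using hpb.fun_mul (hasDerivAt_id b)
  exact ((h_zero.add_const (p b * b)).sub (h_b.comp_add_const 0 b)).congr_deriv (by ring)

section Order

variable [LinearOrder 𝕜] [IsStrictOrderedRing 𝕜] [OrderTopology 𝕜] {x y : 𝕜} {s : Set 𝕜}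

theorem deriv_mul_sub_add_sub_pos_of_strictMonoOn (hp : StrictMonoOn p s) (hx : x ∈ s)
    (hy : y ∈ s) (hxy : x < y) (hacc : AccPt y (𝓟 s)) (hd : HasDerivWithinAt p p' s y) :
    0 < p' * (y - x) + (p y - p x) :=
  add_pos_of_nonneg_of_pos
    (mul_nonneg (hd.nonneg_of_monotoneOn hacc hp.monotoneOn) (sub_nonneg.2 hxy.le))
    (sub_pos.2 (hp hx hy hxy))

theorem deriv_mul_sub_add_sub_neg_of_strictAntiOn (hp : StrictAntiOn p s) (hx : x ∈ s)
    (hy : y ∈ s) (hxy : x < y) (hacc : AccPt y (𝓟 s)) (hd : HasDerivWithinAt p p' s y) :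
    p' * (y - x) + (p y - p x) < 0 :=
  add_neg_of_nonpos_of_neg
    (mul_nonpos_of_nonpos_of_nonneg (hd.nonpos_of_antitoneOn hacc hp.antitoneOn)
      (sub_nonneg.2 hxy.le))
    (sub_neg.2 (hp hx hy hxy))

theorem phi_deriv_at_zero_general (hb : 0 < b) (hp₀ : ContinuousAt p 0) (hpb : HasDerivAt p p' b)
    (hp_mono : StrictMonoOn p (Icc 0 b) ∨ StrictAntiOn p (Icc 0 b)) :
    HasDerivAt (fun a ↦ phi p a b) (-p' * b - (p b - p 0)) 0 ∧ -p' * b - (p b - p 0) ≠ 0 := by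
  refine ⟨hasDerivAt_phi_zero hp₀ hpb, ?_⟩
  have h₀ : 0 ∈ Icc 0 b := left_mem_Icc.2 hb.le
  have hb_mem : b ∈ Icc 0 b := right_mem_Icc.2 hb.le
  have hacc : AccPt b (𝓟 (Icc 0 b)) := accPt_Icc_right hb
  have h_ne : p' * (b - 0) + (p b - p 0) ≠ 0 := by
    rcases hp_mono with h | h
    · exact (deriv_mul_sub_add_sub_pos_of_strictMonoOn h h₀ hb_mem hb hacc
        hpb.hasDerivWithinAt).ne'
    · exact (deriv_mul_sub_add_sub_neg_of_strictAntiOn h h₀ hb_mem hb hacc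
        hpb.hasDerivWithinAt).ne
  contrapose! h_ne
  linear_combination -h_ne

end Order

end NormedField

/-- For `p` differentiable, even and strictly monotone on `[0,∞)` and `b > 0`,
the map `a ↦ φ(a,b)` has a derivative at `a = 0` equal to
`−p'(b) b − (p(b) − p(0))`, and this derivative is nonzero. -/
theorem phi_deriv_at_zero (p : ℝ → ℝ)
    (hp_diff : Differentiable ℝ p)
    (hp_even : ∀ x, p (-x) = p x)
    (hp_mono : StrictMonoOn p (Set.Ici (0 : ℝ)) ∨ StrictAntiOn p (Set.Ici (0 : ℝ)))
    (b : ℝ) (hb : 0 < b) :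
    HasDerivAt (fun a : ℝ => p a * a + p b * b - p (a + b) * (a + b))
        (-(deriv p b) * b - (p b - p 0)) 0 ∧
      -(deriv p b) * b - (p b - p 0) ≠ 0 :=
  phi_deriv_at_zero_general hb (hp_diff 0).continuousAt (hp_diff b).hasDerivAt
    (hp_mono.imp (·.mono Icc_subset_Ici_self) (·.mono Icc_subset_Ici_self))
end

section
/- Under assumptions (A1) and (A2), there exist R ≥ 1 and positive constants c and C (depending only on p and α) such that for all (a,b) with |a| ≤ 1 and |b| ≥ R, one has c |a| (1 + |b|^α) ≤ |φ(a,b)| ≤ C |a| (1 + |b|^α). -/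
/-!
Write `ω x = p x * x`, so that `φ(a, b) = ω a + ω b - ω (a + b)`. By the mean value theorem
`φ(a, b) = a * (p a - ω' ξ)` with `|ξ - b| ≤ |a|`. For bounded `a` and `|b| → ∞` this gives
`|ξ| ~ |b|`, and it remains to see that `p a - ω' x` has exact order `1 + |x| ^ α`. Here
`ω' x = p x + x * p' x` is `O(|x| ^ α)`, and replacing `p` by `-p` we may take `p` increasing on
`[0, ∞)`.

* If `α > 0`, then `x * p' x ≥ 0` and `p x ≥ 0` for large `|x|`, so no cancellation occurs in
  `ω' x`, which is of order `|x| ^ α` and dominates the bounded term `p a`.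
* If `α < 0`, then `ω' x → 0`, while `p`, being strictly monotone with limit `0` at infinity, has no
  zero, so that `|p a|` is bounded below on compact sets.
-/

open Asymptotics Bornology Filter Set Topology

/-- The resonance function `φ(a, b)` of the dispersion relation `ω x = p x * x`. -/
def resonance (p : ℝ → ℝ) (a b : ℝ) : ℝ :=
  p a * a + p b * b - p (a + b) * (a + b)

/-- The derivative `ω'` of the dispersion relation `ω x = p x * x`, for differentiable `p`. -/
noncomputable def groupVelocity (p : ℝ → ℝ) (x : ℝ) : ℝ :=
  p x + x * deriv p x

section Asymptotics

variable {f : ℝ → ℝ} {α R c C : ℝ}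

theorem isTheta_neg_left {ι E F : Type*} [SeminormedAddCommGroup E] [SeminormedAddCommGroup F]
    {l : Filter ι} {u : ι → E} {v : ι → F} : (fun i ↦ -u i) =Θ[l] v ↔ u =Θ[l] v := by
  simp only [IsTheta, isBigO_neg_left, isBigO_neg_right]

theorem isBigO_abs_rpow_of_abs_le (h : ∀ x, R ≤ |x| → |f x| ≤ C * |x| ^ α) :
    f =O[cobounded ℝ] fun x ↦ |x| ^ α := by
  refine .of_bound C ((eventually_cobounded_le_norm R).mono fun x hx ↦ ?_)
  rw [Real.norm_of_nonneg (by positivity : (0 : ℝ) ≤ |x| ^ α)]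
  exact h x hx

theorem isTheta_abs_rpow_of_abs_bounds (hc : 0 < c)
    (h : ∀ x, R ≤ |x| → c * |x| ^ α ≤ |f x| ∧ |f x| ≤ C * |x| ^ α) :
    f =Θ[cobounded ℝ] fun x ↦ |x| ^ α := by
  refine ⟨isBigO_abs_rpow_of_abs_le fun x hx ↦ (h x hx).2,
    .of_bound c⁻¹ ((eventually_cobounded_le_norm R).mono fun x hx ↦ ?_)⟩
  rw [Real.norm_of_nonneg (by positivity : (0 : ℝ) ≤ |x| ^ α), le_inv_mul_iff₀ hc]
  exact (h x hx).1

theorem tendsto_abs_rpow_cobounded_atTop (hα : 0 < α) :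
    Tendsto (fun x : ℝ ↦ |x| ^ α) (cobounded ℝ) atTop :=
  (tendsto_rpow_atTop hα).comp tendsto_norm_cobounded_atTop

theorem tendsto_abs_rpow_cobounded_zero (hα : α < 0) :
    Tendsto (fun x : ℝ ↦ |x| ^ α) (cobounded ℝ) (𝓝 0) := by
  simpa using! (tendsto_rpow_neg_atTop (neg_pos.2 hα)).comp (tendsto_norm_cobounded_atTop (E := ℝ))

theorem one_isLittleO_abs_rpow (hα : 0 < α) :
    (fun _ ↦ 1 : ℝ → ℝ) =o[cobounded ℝ] fun x ↦ |x| ^ α :=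
  (isLittleO_one_left_iff ℝ).2 (tendsto_norm_atTop_atTop.comp (tendsto_abs_rpow_cobounded_atTop hα))

theorem abs_rpow_isLittleO_one (hα : α < 0) :
    (fun x ↦ |x| ^ α) =o[cobounded ℝ] (fun _ ↦ 1 : ℝ → ℝ) :=
  (isLittleO_one_iff ℝ).2 (tendsto_abs_rpow_cobounded_zero hα)

theorem isEquivalent_abs_of_sub_isBigO_one {ι : Type*} {l : Filter ι} {u v : ι → ℝ}
    (huv : (fun i ↦ u i - v i) =O[l] (fun _ ↦ 1 : ι → ℝ)) (hv : Tendsto v l (cobounded ℝ)) :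
    (fun i ↦ |u i|) ~[l] fun i ↦ |v i| := by
  have hle : (fun i ↦ |u i| - |v i|) =O[l] fun i ↦ u i - v i :=
    isBigO_of_le l fun i ↦ abs_abs_sub_abs_le (u i) (v i)
  have hone : (fun _ ↦ 1 : ι → ℝ) =o[l] fun i ↦ |v i| :=
    ((isLittleO_one_left_iff ℝ).2 (tendsto_norm_atTop_iff_cobounded.2 hv)).norm_right
  exact (hle.trans huv).trans_isLittleO hone

theorem exists_bounds_of_isTheta_principal_prod_cobounded {ι E F G : Type*}
    [SeminormedAddCommGroup E] [SeminormedAddCommGroup F] [SeminormedAddCommGroup G]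
    {u : ι × E → F} {v : ι × E → G} {K : Set ι} (h : u =Θ[𝓟 K ×ˢ cobounded E] v) :
    ∃ R c C : ℝ, 1 ≤ R ∧ 0 < c ∧ 0 < C ∧ ∀ a ∈ K, ∀ b, R ≤ ‖b‖ →
      c * ‖v (a, b)‖ ≤ ‖u (a, b)‖ ∧ ‖u (a, b)‖ ≤ C * ‖v (a, b)‖ := by
  obtain ⟨C, hC, hle⟩ := h.1.exists_pos
  obtain ⟨D, hD, hge⟩ := h.2.exists_pos
  have hbounds := hle.bound.and hge.bound
  obtain ⟨R, -, hR⟩ := (hasBasis_cobounded_norm.principal_prod K).eventually_iff.1 hbounds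
  refine ⟨max R 1, D⁻¹, C, le_max_right R 1, inv_pos.2 hD, hC, fun a ha b hb ↦ ?_⟩
  obtain ⟨hupper, hlower⟩ := hR (mk_mem_prod ha (le_of_max_le_left hb))
  exact ⟨(inv_mul_le_iff₀ hD).2 hlower, hupper⟩

end Asymptotics

section MeanValue

variable {p : ℝ → ℝ}

theorem resonance_neg (a b : ℝ) : resonance (-p) a b = -resonance p a b := by
  simp only [resonance, Pi.neg_apply]
  ring

theorem hasDerivAt_mul_id {x : ℝ} (hp : DifferentiableAt ℝ p x) :
    HasDerivAt (fun x ↦ p x * x) (groupVelocity p x) x := by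
  convert! hp.hasDerivAt.mul (hasDerivAt_id x) using 1
  simp only [groupVelocity, id_eq]
  ring

theorem exists_resonance_eq_mul (hp : Differentiable ℝ p) (a b : ℝ) :
    ∃ x, |x - b| ≤ |a| ∧ resonance p a b = a * (p a - groupVelocity p x) := by
  obtain ⟨x, hx, hslope⟩ := domain_mvt (s := univ) (x := b) (y := a + b)
    (fun x _ ↦ (hasDerivAt_mul_id (hp x)).hasFDerivAt.hasFDerivWithinAt)
    convex_univ (mem_univ _) (mem_univ _)
  refine ⟨x, ?_, ?_⟩
  · rw [segment_eq_uIcc] at hx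
    simpa using abs_sub_left_of_mem_uIcc hx
  · simp only [ContinuousLinearMap.toSpanSingleton_apply, smul_eq_mul, add_sub_cancel_right]
      at hslope
    unfold resonance
    linarith

end MeanValue

section Monotone

variable {p : ℝ → ℝ}

theorem apply_abs_of_even (he : p.Even) (x : ℝ) : p |x| = p x := by
  rcases abs_choice x with h | h <;> rw [h]
  exact he x

theorem deriv_neg_of_even (he : p.Even) (x : ℝ) : deriv p (-x) = -deriv p x := by
  rw [← neg_eq_iff_eq_neg, ← deriv_comp_neg, funext he]

theorem mul_deriv_nonneg_of_even (he : p.Even) (hm : MonotoneOn p (Ici 0)) (x : ℝ) :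
    0 ≤ x * deriv p x := by
  have hpos {y : ℝ} (hy : 0 < y) : 0 ≤ y * deriv p y := by
    rw [← derivWithin_of_mem_nhds (Ici_mem_nhds hy)]
    exact mul_nonneg hy.le hm.derivWithin_nonneg
  rcases lt_trichotomy x 0 with hx | rfl | hx
  · simpa [deriv_neg_of_even he] using hpos (neg_pos.2 hx)
  · simp
  · exact hpos hx

theorem le_groupVelocity (he : p.Even) (hm : MonotoneOn p (Ici 0)) (x : ℝ) :
    p x ≤ groupVelocity p x :=
  le_add_of_nonneg_right (mul_deriv_nonneg_of_even he hm x)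

theorem eventually_nonneg_of_tendsto_abs {l : Filter ℝ} (he : p.Even) (hm : MonotoneOn p (Ici 0))
    (h : Tendsto (fun x ↦ |p x|) l atTop) : ∀ᶠ x in l, 0 ≤ p x := by
  filter_upwards [h.eventually_gt_atTop |p 0|] with x hx
  have hmin : p 0 ≤ p x := by
    rw [← apply_abs_of_even he x]
    exact hm self_mem_Ici (abs_nonneg x) (abs_nonneg x)
  by_contra! hneg
  exact hx.not_ge (abs_le_abs_of_nonpos hneg.le hmin)

theorem neg_of_even_of_tendsto_zero (he : p.Even) (hm : StrictMonoOn p (Ici 0))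
    (h : Tendsto p atTop (𝓝 0)) (x : ℝ) : p x < 0 := by
  rw [← apply_abs_of_even he x]
  have hx : |x| + 1 ∈ Ici (0 : ℝ) := by
    simp only [mem_Ici]
    positivity
  have hle : p (|x| + 1) ≤ 0 := by
    refine ge_of_tendsto h ((eventually_ge_atTop (|x| + 1)).mono fun y hy ↦ ?_)
    exact hm.monotoneOn hx (le_trans hx hy) hy
  exact (hm (abs_nonneg x) hx (lt_add_one _)).trans_le hle

end Monotone

section Order

variable {p : ℝ → ℝ} {α : ℝ} {K : Set ℝ}

theorem groupVelocity_isBigO (hp : p =O[cobounded ℝ] fun x ↦ |x| ^ α)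
    (hp' : deriv p =O[cobounded ℝ] fun x ↦ |x| ^ (α - 1)) :
    groupVelocity p =O[cobounded ℝ] fun x ↦ |x| ^ α := by
  refine hp.add (((isBigO_refl id _).abs_right.mul hp').trans_eventuallyEq ?_)
  filter_upwards [eventually_ne_cobounded 0] with x hx
  rw [Real.rpow_sub_one (abs_ne_zero.2 hx), id, mul_div_cancel₀ _ (abs_ne_zero.2 hx)]

theorem groupVelocity_isTheta (hα : 0 < α) (he : p.Even) (hm : MonotoneOn p (Ici 0))
    (hp : p =Θ[cobounded ℝ] fun x ↦ |x| ^ α)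
    (hp' : deriv p =O[cobounded ℝ] fun x ↦ |x| ^ (α - 1)) :
    groupVelocity p =Θ[cobounded ℝ] fun x ↦ |x| ^ α := by
  have htop : Tendsto (fun x ↦ |p x|) (cobounded ℝ) atTop :=
    hp.tendsto_norm_atTop_iff.2
      (tendsto_norm_atTop_atTop.comp (tendsto_abs_rpow_cobounded_atTop hα))
  refine ⟨groupVelocity_isBigO hp.1 hp', hp.2.trans (.of_norm_eventuallyLE ?_)⟩
  filter_upwards [eventually_nonneg_of_tendsto_abs he hm htop] with x hx
  rw [Real.norm_of_nonneg hx]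
  exact le_groupVelocity he hm x

theorem sub_groupVelocity_isTheta_of_pos (hα : 0 < α) (hK : IsCompact K) (hc : ContinuousOn p K)
    (he : p.Even) (hm : MonotoneOn p (Ici 0)) (hp : p =Θ[cobounded ℝ] fun x ↦ |x| ^ α)
    (hp' : deriv p =O[cobounded ℝ] fun x ↦ |x| ^ (α - 1)) :
    (fun q : ℝ × ℝ ↦ p q.1 - groupVelocity p q.2) =Θ[𝓟 K ×ˢ cobounded ℝ]
      fun q ↦ 1 + |q.2| ^ α := by
  have hbounded : (fun q : ℝ × ℝ ↦ p q.1) =o[𝓟 K ×ˢ cobounded ℝ] fun q ↦ |q.2| ^ α :=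
    ((hc.isBigO_principal hK (norm_ne_zero_iff.2 one_ne_zero)).comp_fst _).trans_isLittleO
      ((one_isLittleO_abs_rpow hα).comp_snd _)
  have hdom : (fun q : ℝ × ℝ ↦ -groupVelocity p q.2) =Θ[𝓟 K ×ˢ cobounded ℝ] fun q ↦ |q.2| ^ α :=
    isTheta_neg_left.2 ((groupVelocity_isTheta hα he hm hp hp').comp_snd _)
  have hone : (fun q : ℝ × ℝ ↦ 1 + |q.2| ^ α) =Θ[𝓟 K ×ˢ cobounded ℝ] fun q ↦ |q.2| ^ α :=
    ((one_isLittleO_abs_rpow hα).add_isTheta isTheta_rfl).comp_snd _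
  simpa only [sub_eq_add_neg] using! (hbounded.add_isTheta hdom).trans hone.symm

theorem sub_groupVelocity_isTheta_of_neg (hα : α < 0) (hK : IsCompact K) (hc : ContinuousOn p K)
    (he : p.Even) (hm : StrictMonoOn p (Ici 0)) (hp : p =O[cobounded ℝ] fun x ↦ |x| ^ α)
    (hp' : deriv p =O[cobounded ℝ] fun x ↦ |x| ^ (α - 1)) :
    (fun q : ℝ × ℝ ↦ p q.1 - groupVelocity p q.2) =Θ[𝓟 K ×ˢ cobounded ℝ]
      fun q ↦ 1 + |q.2| ^ α := by
  have hzero : Tendsto p atTop (𝓝 0) :=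
    (hp.trans_tendsto (tendsto_abs_rpow_cobounded_zero hα)).mono_left
      IsOrderBornology.atTop_le_cobounded
  have hdom : (fun q : ℝ × ℝ ↦ p q.1) =Θ[𝓟 K ×ˢ cobounded ℝ] (fun _ ↦ 1 : ℝ × ℝ → ℝ) :=
    (hc.isTheta_principal hK (norm_ne_zero_iff.2 one_ne_zero)
      fun x _ ↦ (neg_of_even_of_tendsto_zero he hm hzero x).ne).comp_fst _
  have hdecay : (fun q : ℝ × ℝ ↦ -groupVelocity p q.2) =o[𝓟 K ×ˢ cobounded ℝ]
      (fun _ ↦ 1 : ℝ × ℝ → ℝ) :=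
    (((groupVelocity_isBigO hp hp').trans_isLittleO
      (abs_rpow_isLittleO_one hα)).comp_snd _).neg_left
  have hone : (fun q : ℝ × ℝ ↦ 1 + |q.2| ^ α) =Θ[𝓟 K ×ˢ cobounded ℝ] (fun _ ↦ 1 : ℝ × ℝ → ℝ) :=
    (isTheta_rfl.add_isLittleO (abs_rpow_isLittleO_one hα)).comp_snd _
  simpa only [sub_eq_add_neg] using! (hdom.add_isLittleO hdecay).trans hone.symm

theorem resonance_isTheta_of_strictMonoOn (hα : α ≠ 0) (hK : IsCompact K) (hd : Differentiable ℝ p)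
    (he : p.Even) (hm : StrictMonoOn p (Ici 0)) (hp : p =Θ[cobounded ℝ] fun x ↦ |x| ^ α)
    (hp' : deriv p =O[cobounded ℝ] fun x ↦ |x| ^ (α - 1)) :
    (fun q : ℝ × ℝ ↦ resonance p q.1 q.2) =Θ[𝓟 K ×ˢ cobounded ℝ]
      fun q ↦ q.1 * (1 + |q.2| ^ α) := by
  have hfactor : (fun q : ℝ × ℝ ↦ p q.1 - groupVelocity p q.2) =Θ[𝓟 K ×ˢ cobounded ℝ]
      fun q ↦ 1 + |q.2| ^ α :=
    hα.lt_or_gt.elim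
      (sub_groupVelocity_isTheta_of_neg · hK hd.continuous.continuousOn he hm hp.1 hp')
      (sub_groupVelocity_isTheta_of_pos · hK hd.continuous.continuousOn he hm.monotoneOn hp hp')
  choose ξ hξ hres using exists_resonance_eq_mul hd
  have hsub : (fun q : ℝ × ℝ ↦ ξ q.1 q.2 - q.2) =O[𝓟 K ×ˢ cobounded ℝ] (fun _ ↦ 1 : ℝ × ℝ → ℝ) :=
    (isBigO_of_le _ fun q ↦ hξ q.1 q.2).trans
      ((continuousOn_id.isBigO_principal hK (norm_ne_zero_iff.2 one_ne_zero)).comp_fst _)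
  have hequiv : (fun q : ℝ × ℝ ↦ |ξ q.1 q.2|) ~[𝓟 K ×ˢ cobounded ℝ] fun q ↦ |q.2| :=
    isEquivalent_abs_of_sub_isBigO_one hsub tendsto_snd
  have htendsto : Tendsto (fun q : ℝ × ℝ ↦ (q.1, ξ q.1 q.2)) (𝓟 K ×ˢ cobounded ℝ)
      (𝓟 K ×ˢ cobounded ℝ) :=
    tendsto_fst.prodMk (tendsto_norm_atTop_iff_cobounded.1
      (hequiv.symm.tendsto_atTop (tendsto_norm_cobounded_atTop.comp tendsto_snd)))
  have hweight : (fun q : ℝ × ℝ ↦ 1 + |ξ q.1 q.2| ^ α) ~[𝓟 K ×ˢ cobounded ℝ]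
      fun q ↦ 1 + |q.2| ^ α :=
    IsEquivalent.refl.add_add_of_nonneg (fun _ ↦ zero_le_one) (fun q ↦ by positivity)
      (hequiv.rpow fun _ ↦ abs_nonneg _)
  simp_rw [hres]
  exact isTheta_rfl.mul (IsTheta.trans
    ⟨hfactor.1.comp_tendsto htendsto, hfactor.2.comp_tendsto htendsto⟩ hweight.isTheta)

theorem resonance_isTheta (hα : α ≠ 0) (hK : IsCompact K) (hd : Differentiable ℝ p) (he : p.Even)
    (hm : StrictMonoOn p (Ici 0) ∨ StrictAntiOn p (Ici 0))
    (hp : p =Θ[cobounded ℝ] fun x ↦ |x| ^ α)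
    (hp' : deriv p =O[cobounded ℝ] fun x ↦ |x| ^ (α - 1)) :
    (fun q : ℝ × ℝ ↦ resonance p q.1 q.2) =Θ[𝓟 K ×ˢ cobounded ℝ]
      fun q ↦ q.1 * (1 + |q.2| ^ α) := by
  rcases hm with hm | hm
  · exact resonance_isTheta_of_strictMonoOn hα hK hd he hm hp hp'
  · have h := resonance_isTheta_of_strictMonoOn hα hK hd.neg
      (fun x ↦ congrArg Neg.neg (he x)) hm.neg (isTheta_neg_left.2 hp)
      (by rw [deriv.neg']; exact hp'.neg_left)
    simpa only [resonance_neg, isTheta_neg_left] using h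

end Order

theorem phi_bounded_a_bound_general {α : ℝ} (hα : α ≠ 0) {p : ℝ → ℝ} (hp : Differentiable ℝ p)
    (hp_even : p.Even) (hp_mono : StrictMonoOn p (Ici 0) ∨ StrictAntiOn p (Ici 0))
    {c₀ C₀ R₀ : ℝ} (hc₀ : 0 < c₀)
    (hp_bounds : ∀ ξ : ℝ, R₀ ≤ |ξ| → c₀ * |ξ| ^ α ≤ |p ξ| ∧ |p ξ| ≤ C₀ * |ξ| ^ α)
    (hderiv_le : ∀ ξ : ℝ, R₀ ≤ |ξ| → |deriv p ξ| ≤ C₀ * |ξ| ^ (α - 1)) (A : ℝ) :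
    ∃ R c C : ℝ, 1 ≤ R ∧ 0 < c ∧ 0 < C ∧
      ∀ a b : ℝ, |a| ≤ A → R ≤ |b| →
        c * |a| * (1 + |b| ^ α) ≤ |p a * a + p b * b - p (a + b) * (a + b)| ∧
        |p a * a + p b * b - p (a + b) * (a + b)| ≤ C * |a| * (1 + |b| ^ α) := by
  obtain ⟨R, c, C, hR, hc, hC, h⟩ := exists_bounds_of_isTheta_principal_prod_cobounded
    (resonance_isTheta hα (isCompact_closedBall 0 A) hp hp_even hp_mono
      (isTheta_abs_rpow_of_abs_bounds hc₀ hp_bounds) (isBigO_abs_rpow_of_abs_le hderiv_le))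
  refine ⟨R, c, C, hR, hc, hC, fun a b ha hb ↦ ?_⟩
  have habs : |a * (1 + |b| ^ α)| = |a| * (1 + |b| ^ α) := by
    rw [abs_mul, abs_of_pos (by positivity : 0 < 1 + |b| ^ α)]
  simpa only [Real.norm_eq_abs, habs, mul_assoc, resonance] using
    h a (mem_closedBall_zero_iff.2 ha) b hb

/-- Under assumptions (A1) and (A2), the bound `|φ(a,b)| ≍ |a|(1 + |b|^α)`
holds for `|a| ≤ 1` and `|b|` large. -/
theorem phi_bounded_a_bound
    (α : ℝ) (hα : α ∈ Set.Icc (-1 : ℝ) 1) (hα0 : α ≠ 0)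
    (p : ℝ → ℝ)
    -- (A1)
    (hp_smooth : ContDiff ℝ 2 p)
    (hp_even : ∀ x, p (-x) = p x)
    (hp_mono : StrictMonoOn p (Set.Ici (0 : ℝ)) ∨ StrictAntiOn p (Set.Ici (0 : ℝ)))
    -- (A2)
    (c₀ C₀ R₀ : ℝ) (hc₀ : 0 < c₀) (hc₀C₀ : c₀ ≤ C₀) (hR₀ : 1 ≤ R₀)
    (hA2₀ : ∀ ξ : ℝ, R₀ ≤ |ξ| → c₀ * |ξ| ^ α ≤ |p ξ| ∧ |p ξ| ≤ C₀ * |ξ| ^ α)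
    (hA2₁ : ∀ ξ : ℝ, R₀ ≤ |ξ| →
      c₀ * |ξ| ^ (α - 1) ≤ |deriv p ξ| ∧ |deriv p ξ| ≤ C₀ * |ξ| ^ (α - 1))
    (hA2₂ : ∀ ξ : ℝ, R₀ ≤ |ξ| →
      c₀ * |ξ| ^ (α - 2) ≤ |deriv (deriv p) ξ| ∧ |deriv (deriv p) ξ| ≤ C₀ * |ξ| ^ (α - 2)) :
    ∃ R c C : ℝ, 1 ≤ R ∧ 0 < c ∧ 0 < C ∧
      ∀ a b : ℝ, |a| ≤ 1 → R ≤ |b| →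
        c * |a| * (1 + |b| ^ α) ≤ |p a * a + p b * b - p (a + b) * (a + b)| ∧
        |p a * a + p b * b - p (a + b) * (a + b)| ≤ C * |a| * (1 + |b| ^ α) := by
  exact phi_bounded_a_bound_general hα0 (hp_smooth.differentiable two_ne_zero) hp_even hp_mono hc₀
    hA2₀ (fun ξ hξ ↦ (hA2₁ ξ hξ).2) 1
end
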